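/- arXiv:2106.15362 — 2 statements merged into one kernel-verified Lean document; each statement's English description precedes it below -/
import Mathlib

section
/- For a simple graph G on n vertices with p-Sombor matrix S_p(G) (p ≠ 0 a real number), the fourth spectral moment satisfies N_4 = tr((S_p(G))^4) = ∑_{i=1}^n ( ∑_{j : v_j ∼ v_i} ((d_i)^p + (d_j)^p)^{2/p} )^2 + ∑_{i ≠ j} ( ∑_{k : v_k ∼ v_i and v_k ∼ v_j} ((d_i)^p + (d_k)^p)^{1/p} ((d_j)^p + (d_k)^p)^{1/p} )^2. -/
open Finset

/-- The `p`-Sombor matrix of a simple graph `G` on vertices `{0, …, n-1}`: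
its `(i,j)` entry is `((d i)^p + (d j)^p)^(1/p)` when `i ~ j`, and `0` otherwise. -/
noncomputable def somborMatrix (n : ℕ) (G : SimpleGraph (Fin n)) [DecidableRel G.Adj]
    (p : ℝ) : Matrix (Fin n) (Fin n) ℝ :=
  Matrix.of fun i j =>
    if G.Adj i j then ((G.degree i : ℝ) ^ p + (G.degree j : ℝ) ^ p) ^ (1 / p) else 0

/-- Sum of a symmetric weight `f` over the edges of `G`
(each unordered edge counted once). -/
noncomputable def edgeSum (n : ℕ) (G : SimpleGraph (Fin n)) [DecidableRel G.Adj]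
    (f : Fin n → Fin n → ℝ) : ℝ :=
  (1 / 2) * ∑ i, ∑ j, if G.Adj i j then f i j else 0

/-- The `p`-Sombor index `SO_p(G) = ∑_{ij ∈ E(G)} ((d i)^p + (d j)^p)^(1/p)`. -/
noncomputable def somborIndex (n : ℕ) (G : SimpleGraph (Fin n)) [DecidableRel G.Adj]
    (p : ℝ) : ℝ :=
  edgeSum n G fun i j => ((G.degree i : ℝ) ^ p + (G.degree j : ℝ) ^ p) ^ (1 / p)

/-! For a symmetric matrix `A`, the square `A ^ 2` is again symmetric, so the trace of `A ^ 4` is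
the sum of the squares of the entries of `A ^ 2`. For a weighted adjacency matrix these entries sum
the weights of the walks of length two: closed walks run back and forth along one edge and give the
diagonal, the others pass through a common neighbour. -/

section Matrix

variable {n R M : Type*} [Fintype n] [DecidableEq n]

theorem sum_sum_eq_sum_diag_add_sum_ne [AddCommMonoid M] (f : n → n → M) :
    ∑ i, ∑ j, f i j = ∑ i, f i i + ∑ i, ∑ j, if i ≠ j then f i j else 0 := by
  simp only [← sum_add_distrib, ← sum_filter, filter_ne]
  exact sum_congr rfl fun i _ => (add_sum_erase univ (f i) (mem_univ i)).symm

theorem trace_sq_of_isSymm [Semiring R] {A : Matrix n n R} (hA : A.IsSymm) :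
    Matrix.trace (A ^ 2) = ∑ i, ∑ j, A i j ^ 2 := by
  simp only [sq, Matrix.trace, Matrix.diag_apply, Matrix.mul_apply, hA.apply]

theorem trace_pow_four_of_isSymm [CommSemiring R] {A : Matrix n n R} (hA : A.IsSymm) :
    Matrix.trace (A ^ 4) =
      ∑ i, (A ^ 2) i i ^ 2 + ∑ i, ∑ j, if i ≠ j then (A ^ 2) i j ^ 2 else 0 := by
  rw [pow_mul A 2 2, trace_sq_of_isSymm (hA.pow 2), sum_sum_eq_sum_diag_add_sum_ne]

end Matrix

section WeightedGraph

variable {V R : Type*} (G : SimpleGraph V) [DecidableRel G.Adj]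

/-- The adjacency matrix of `G` with the entry at each edge `ij` replaced by the weight `w i j`.
The values of `w` at non-adjacent pairs are ignored. The `p`-Sombor matrix is the case of the weight
`somborWeight G p`. -/
def weightedAdjMatrix [Zero R] (w : V → V → R) : Matrix V V R :=
  Matrix.of fun i j => if G.Adj i j then w i j else 0

theorem isSymm_weightedAdjMatrix [Zero R] {w : V → V → R} (hw : ∀ i j, w i j = w j i) :
    (weightedAdjMatrix G w).IsSymm :=
  Matrix.IsSymm.ext fun i j => by simp only [weightedAdjMatrix, Matrix.of_apply, G.adj_comm i, hw i]

variable [Fintype V] [DecidableEq V]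

theorem weightedAdjMatrix_sq_apply [Semiring R] {w : V → V → R}
    (hw : ∀ i j, w i j = w j i) (i j : V) :
    (weightedAdjMatrix G w ^ 2) i j =
      ∑ k, if G.Adj k i ∧ G.Adj k j then w i k * w j k else 0 := by
  simp only [sq, Matrix.mul_apply, weightedAdjMatrix, Matrix.of_apply, G.adj_comm i, hw j,
    ite_zero_mul_ite_zero]

theorem weightedAdjMatrix_sq_apply_self [Semiring R] {w : V → V → R}
    (hw : ∀ i j, w i j = w j i) (i : V) :
    (weightedAdjMatrix G w ^ 2) i i = ∑ j, if G.Adj i j then w i j ^ 2 else 0 := by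
  simp only [weightedAdjMatrix_sq_apply G hw, and_self, G.adj_comm i, sq]

theorem somborMatrix_trace_fourth_general [CommSemiring R] {w : V → V → R}
    (hw : ∀ i j, w i j = w j i) :
    Matrix.trace (weightedAdjMatrix G w ^ 4) =
      ∑ i, (∑ j, if G.Adj i j then w i j ^ 2 else 0) ^ 2 +
      ∑ i, ∑ j, if i ≠ j then
          (∑ k, if G.Adj k i ∧ G.Adj k j then w i k * w j k else 0) ^ 2
        else 0 := by
  simp only [trace_pow_four_of_isSymm (isSymm_weightedAdjMatrix G hw),
    weightedAdjMatrix_sq_apply_self G hw, weightedAdjMatrix_sq_apply G hw]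

end WeightedGraph

section Sombor

variable {V : Type*} [Fintype V] (G : SimpleGraph V) [DecidableRel G.Adj] (p : ℝ)

/-- The `p`-Sombor weight of the pair `ij`: the value at `ij` of the `p`-Sombor matrix when `ij` is
an edge. It is defined for all pairs, so that it is symmetric without an adjacency hypothesis. -/
noncomputable def somborWeight (i j : V) : ℝ :=
  ((G.degree i : ℝ) ^ p + (G.degree j : ℝ) ^ p) ^ (1 / p)

theorem somborWeight_comm (i j : V) : somborWeight G p i j = somborWeight G p j i := by
  simp only [somborWeight, add_comm]

theorem somborWeight_sq (i j : V) :
    somborWeight G p i j ^ 2 = ((G.degree i : ℝ) ^ p + (G.degree j : ℝ) ^ p) ^ (2 / p) := by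
  rw [somborWeight, ← Real.rpow_mul_natCast (by positivity), Nat.cast_ofNat, one_div_mul_eq_div]

end Sombor

theorem somborMatrix_eq_weightedAdjMatrix (n : ℕ) (G : SimpleGraph (Fin n)) [DecidableRel G.Adj]
    (p : ℝ) : somborMatrix n G p = weightedAdjMatrix G (somborWeight G p) :=
  rfl

/-- The fourth spectral moment of the `p`-Sombor matrix:
`N₄ = tr((S_p(G))⁴) = ∑_i ( ∑_{j ∼ i} ((d_i)^p + (d_j)^p)^(2/p) )² +
  ∑_{i ≠ j} ( ∑_{k ∼ i, k ∼ j} ((d_i)^p + (d_k)^p)^(1/p) ((d_j)^p + (d_k)^p)^(1/p) )²`. -/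
theorem somborMatrix_trace_fourth (n : ℕ) (G : SimpleGraph (Fin n)) [DecidableRel G.Adj]
    (hdeg : ∀ i : Fin n, 0 < G.degree i) (p : ℝ) (hp : p ≠ 0) :
    Matrix.trace (somborMatrix n G p ^ 4) =
      (∑ i, (∑ j, if G.Adj i j then
          ((G.degree i : ℝ) ^ p + (G.degree j : ℝ) ^ p) ^ (2 / p) else 0) ^ 2) +
      ∑ i, ∑ j, if i ≠ j then
          (∑ k, if G.Adj k i ∧ G.Adj k j then
              ((G.degree i : ℝ) ^ p + (G.degree k : ℝ) ^ p) ^ (1 / p) *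
                ((G.degree j : ℝ) ^ p + (G.degree k : ℝ) ^ p) ^ (1 / p)
            else 0) ^ 2
        else 0 := by
  simp only [← somborWeight_sq, somborMatrix_eq_weightedAdjMatrix]
  exact somborMatrix_trace_fourth_general G (somborWeight_comm G p)
end

section
/- Let G be a connected bipartite simple graph on n ≥ 2 vertices with bipartition (X_1, X_2), |X_1| = n_1, |X_2| = n_2, n = n_1 + n_2, and let p ≠ 0 be a real number. If η_max and η_2nd-min denote the largest eigenvalue and the second smallest eigenvalue of the p-Sombor Laplacian matrix L_p(G), then (n_1 n_2 / n) η_2nd-min ≤ SO_p(G) ≤ (n_1 n_2 / n) η_max. -/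
open Finset

/-- The `p`-Sombor Laplacian matrix `L_p(G) = D_p(G) − S_p(G)`, where `D_p(G)` is the
diagonal matrix of the row sums of `S_p(G)`. -/
noncomputable def somborLaplacian (n : ℕ) (G : SimpleGraph (Fin n)) [DecidableRel G.Adj]
    (p : ℝ) : Matrix (Fin n) (Fin n) ℝ :=
  Matrix.diagonal (fun i => ∑ k, somborMatrix n G p i k) - somborMatrix n G p

/-!
Write `L` for the Laplacian of a weighted graph and, for a set `X` of vertices, let `x` be `|Xᶜ|` on
`X` and `-|X|` off `X`. Then `x` is orthogonal to the constants, `‖x‖² = n |X| |Xᶜ|`, and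
`⟪x, L x⟫ = ∑ w i j (x i - x j)²` over the edges `ij` is `n²` times the weight of the cut `(X, Xᶜ)`.
The Rayleigh quotient of `x` is at most the largest eigenvalue of `L` and, as the constants are
eigenvectors for the smallest eigenvalue `0`, at least the second smallest, so that both bound the
weight of the cut. In a bipartite graph every edge crosses the cut between the two parts.
-/

open scoped Matrix InnerProductSpace

section Eigenbasis

variable {𝕜 E ι : Type*} [RCLike 𝕜] [NormedAddCommGroup E] [InnerProductSpace 𝕜 E] [Fintype ι]
  {b : OrthonormalBasis ι 𝕜 E} {T : E →ₗ[𝕜] E} {μ : ι → ℝ} {c ν : ℝ} {u x : E}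

lemma inner_eigenbasis_map (hT : ∀ i, T (b i) = (μ i : 𝕜) • b i) (x : E) (i : ι) :
    ⟪b i, T x⟫_𝕜 = μ i * ⟪b i, x⟫_𝕜 := by
  classical
  conv_lhs => rw [← b.sum_repr' x]
  simp [hT, inner_sum, inner_smul_right, b.inner_eq_ite, mul_comm]

lemma re_inner_map_eq_sum_eigenbasis (hT : ∀ i, T (b i) = (μ i : 𝕜) • b i) (x : E) :
    RCLike.re ⟪x, T x⟫_𝕜 = ∑ i, μ i * ‖⟪b i, x⟫_𝕜‖ ^ 2 := by
  rw [← b.sum_inner_mul_inner, map_sum]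
  refine sum_congr rfl fun i _ => ?_
  rw [inner_eigenbasis_map hT, mul_left_comm, RCLike.re_ofReal_mul, inner_mul_symm_re_eq_norm,
    norm_mul, norm_inner_symm x, sq]

lemma re_inner_map_le_of_eigenvalues_le (hT : ∀ i, T (b i) = (μ i : 𝕜) • b i)
    (hc : ∀ i, μ i ≤ c) (x : E) : RCLike.re ⟪x, T x⟫_𝕜 ≤ c * ‖x‖ ^ 2 := by
  rw [re_inner_map_eq_sum_eigenbasis hT, ← b.sum_sq_norm_inner_right, mul_sum]
  gcongr with i
  exact hc i

lemma le_re_inner_map_of_le_eigenvalues (hT : ∀ i, T (b i) = (μ i : 𝕜) • b i)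
    (hc : ∀ i, c ≤ μ i ∨ ⟪b i, x⟫_𝕜 = 0) : c * ‖x‖ ^ 2 ≤ RCLike.re ⟪x, T x⟫_𝕜 := by
  rw [re_inner_map_eq_sum_eigenbasis hT, ← b.sum_sq_norm_inner_right, mul_sum]
  refine sum_le_sum fun i _ => ?_
  rcases hc i with hi | hi
  · gcongr
  · simp [hi]

lemma inner_eigenbasis_eq_zero_of_ne (hT : ∀ i, T (b i) = (μ i : 𝕜) • b i)
    (hu : T u = (ν : 𝕜) • u) {i : ι} (hi : μ i ≠ ν) : ⟪b i, u⟫_𝕜 = 0 := by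
  have h : (ν : 𝕜) * ⟪b i, u⟫_𝕜 = μ i * ⟪b i, u⟫_𝕜 := by
    rw [← inner_smul_right, ← hu, inner_eigenbasis_map hT]
  exact (mul_eq_mul_right_iff.1 h).resolve_left fun hν => hi (RCLike.ofReal_injective hν).symm

lemma le_re_inner_map_of_inner_eigenvector_eq_zero (hT : ∀ i, T (b i) = (μ i : 𝕜) • b i)
    (hu : T u = (ν : 𝕜) • u) (hu0 : u ≠ 0) {i₀ : ι} (hν : ν ≤ μ i₀) (hc : ∀ i ≠ i₀, c ≤ μ i)
    (hux : ⟪u, x⟫_𝕜 = 0) : c * ‖x‖ ^ 2 ≤ RCLike.re ⟪x, T x⟫_𝕜 := by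
  refine le_re_inner_map_of_le_eigenvalues hT fun i => ?_
  obtain hi | rfl := ne_or_eq i i₀
  · exact .inl (hc i hi)
  refine (le_or_gt c ν).imp hν.trans' fun hνc => ?_
  -- The eigenvalue `ν` of `u` is now below all `μ j` with `j ≠ i`, so `u` is parallel to `b i`.
  have hu_eq : ⟪b i, u⟫_𝕜 • b i = u := by
    rw [← Fintype.sum_eq_single (f := fun j => ⟪b j, u⟫_𝕜 • b j) i fun j hj => ?_, b.sum_repr' u]
    rw [inner_eigenbasis_eq_zero_of_ne hT hu (hνc.trans_le (hc j hj)).ne', zero_smul]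
  rw [← hu_eq, inner_smul_left, mul_eq_zero, map_eq_zero] at hux
  exact hux.resolve_left fun h => hu0 (by rw [← hu_eq, h, zero_smul])

end Eigenbasis

section HermitianMatrix

variable {𝕜 V : Type*} [RCLike 𝕜] [Fintype V]

lemma inner_toLp_eq_star_dotProduct (x y : V → 𝕜) :
    ⟪WithLp.toLp 2 x, WithLp.toLp 2 y⟫_𝕜 = star x ⬝ᵥ y := by
  rw [EuclideanSpace.inner_toLp_toLp, dotProduct_comm]

lemma norm_toLp_sq_eq_re_star_dotProduct (x : V → 𝕜) :
    ‖WithLp.toLp 2 x‖ ^ 2 = RCLike.re (star x ⬝ᵥ x) := by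
  rw [← inner_self_eq_norm_sq (𝕜 := 𝕜), inner_toLp_eq_star_dotProduct]

variable [DecidableEq V] {A : Matrix V V 𝕜} {c ν : ℝ} {u x : V → 𝕜}

lemma toEuclideanLin_eigenvectorBasis (hA : A.IsHermitian) (i : V) :
    A.toEuclideanLin (hA.eigenvectorBasis i) =
      (hA.eigenvalues i : 𝕜) • hA.eigenvectorBasis i := by
  ext j
  simpa [Matrix.toLpLin_apply, RCLike.real_smul_eq_coe_mul] using
    congr_fun (hA.mulVec_eigenvectorBasis i) j

lemma re_star_dotProduct_mulVec_le_of_eigenvalues_le (hA : A.IsHermitian)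
    (hc : ∀ i, hA.eigenvalues i ≤ c) (x : V → 𝕜) :
    RCLike.re (star x ⬝ᵥ A *ᵥ x) ≤ c * RCLike.re (star x ⬝ᵥ x) := by
  have h := re_inner_map_le_of_eigenvalues_le (toEuclideanLin_eigenvectorBasis hA) hc
    (WithLp.toLp 2 x)
  rwa [Matrix.toLpLin_toLp, Matrix.toLin'_apply, inner_toLp_eq_star_dotProduct,
    norm_toLp_sq_eq_re_star_dotProduct] at h

lemma le_re_star_dotProduct_mulVec_of_star_eigenvector_dotProduct_eq_zero (hA : A.IsHermitian)
    (hu : A *ᵥ u = (ν : 𝕜) • u) (hu0 : u ≠ 0) {i₀ : V} (hν : ν ≤ hA.eigenvalues i₀)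
    (hc : ∀ i ≠ i₀, c ≤ hA.eigenvalues i) (hux : star u ⬝ᵥ x = 0) :
    c * RCLike.re (star x ⬝ᵥ x) ≤ RCLike.re (star x ⬝ᵥ A *ᵥ x) := by
  have hTu : A.toEuclideanLin (WithLp.toLp 2 u) = (ν : 𝕜) • WithLp.toLp 2 u := by
    rw [Matrix.toLpLin_toLp, Matrix.toLin'_apply, hu, WithLp.toLp_smul]
  have h := le_re_inner_map_of_inner_eigenvector_eq_zero (toEuclideanLin_eigenvectorBasis hA)
    hTu (by simpa using hu0) hν hc ((inner_toLp_eq_star_dotProduct u x).trans hux)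
  rwa [Matrix.toLpLin_toLp, Matrix.toLin'_apply, inner_toLp_eq_star_dotProduct,
    norm_toLp_sq_eq_re_star_dotProduct] at h

end HermitianMatrix

section WeightedLaplacian

variable {V R : Type*} [Fintype V] [DecidableEq V]

/-- The Laplacian of the weighted graph on `V` with weight matrix `w`: the diagonal matrix of the
row sums of `w`, minus `w`. Loops are allowed, but their weights cancel. -/
def weightedLaplacian [AddCommGroup R] (w : Matrix V V R) : Matrix V V R :=
  Matrix.diagonal (fun i => ∑ j, w i j) - w

/-- The total weight of the edges between `X` and its complement, each being counted once, from its
endpoint in `X`. -/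
def cutWeight [AddCommMonoid R] (w : Matrix V V R) (X : Finset V) : R :=
  ∑ i ∈ X, ∑ j ∈ Xᶜ, w i j

/-- The vector equal to `|Xᶜ|` on `X` and to `-|X|` off `X`, a multiple of the projection of the
indicator vector of `X` onto the orthogonal complement of the constants. -/
def cutVector (R : Type*) [Ring R] (X : Finset V) (i : V) : R :=
  if i ∈ X then #Xᶜ else -#X

lemma sum_comp_cutVector {M : Type*} [Ring R] [AddCommMonoid M] (f : R → M) (X : Finset V) :
    ∑ i, f (cutVector R X i) = #X • f #Xᶜ + #Xᶜ • f (-#X) := by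
  rw [← sum_add_sum_compl X]
  congr 1
  · exact sum_eq_card_nsmul fun i hi => by rw [cutVector, if_pos hi]
  · exact sum_eq_card_nsmul fun i hi => by rw [cutVector, if_neg (mem_compl.1 hi)]

lemma isHermitian_weightedLaplacian {w : Matrix V V ℝ} (hw : w.IsSymm) :
    (weightedLaplacian w).IsHermitian :=
  (Matrix.isHermitian_diagonal _).sub hw

section CommRing

variable [CommRing R] {w : Matrix V V R}

lemma weightedLaplacian_mulVec_apply (w : Matrix V V R) (x : V → R) (i : V) :
    (weightedLaplacian w *ᵥ x) i = ∑ j, w i j * (x i - x j) := by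
  rw [weightedLaplacian, Matrix.sub_mulVec, Pi.sub_apply, Matrix.mulVec_diagonal, sum_mul]
  simp only [Matrix.mulVec, dotProduct, mul_sub, sum_sub_distrib]

lemma weightedLaplacian_mulVec_one (w : Matrix V V R) : weightedLaplacian w *ᵥ 1 = 0 := by
  ext i
  simp [weightedLaplacian_mulVec_apply]

lemma two_mul_dotProduct_weightedLaplacian_mulVec (hw : w.IsSymm) (x : V → R) :
    2 * (x ⬝ᵥ weightedLaplacian w *ᵥ x) = ∑ i, ∑ j, w i j * (x i - x j) ^ 2 := by
  have hrow : x ⬝ᵥ weightedLaplacian w *ᵥ x = ∑ i, ∑ j, w i j * (x i * (x i - x j)) := by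
    simp only [dotProduct, weightedLaplacian_mulVec_apply, mul_sum, mul_left_comm]
  have hcol : x ⬝ᵥ weightedLaplacian w *ᵥ x = ∑ i, ∑ j, w i j * (x j * (x j - x i)) := by
    rw [hrow, sum_comm]
    simp only [hw.apply]
  calc
    2 * (x ⬝ᵥ weightedLaplacian w *ᵥ x)
      = ∑ i, ∑ j, w i j * (x i * (x i - x j)) + ∑ i, ∑ j, w i j * (x j * (x j - x i)) := by
        rw [← hrow, ← hcol, two_mul]
    _ = ∑ i, ∑ j, w i j * (x i - x j) ^ 2 := by
        simp only [← sum_add_distrib]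
        exact sum_congr rfl fun i _ => sum_congr rfl fun j _ => by ring

lemma two_mul_cutWeight (hw : w.IsSymm) (X : Finset V) :
    2 * cutWeight w X = ∑ i, ∑ j, if i ∈ X ↔ j ∉ X then w i j else 0 := by
  have hflip : cutWeight w X = ∑ i ∈ Xᶜ, ∑ j ∈ X, w i j :=
    sum_comm.trans (by simp only [hw.apply])
  calc
    2 * cutWeight w X = ∑ i ∈ X, ∑ j ∈ Xᶜ, w i j + ∑ i ∈ Xᶜ, ∑ j ∈ X, w i j := by
      rw [← hflip, two_mul, cutWeight]
    _ = ∑ i, ∑ j, if i ∈ X ↔ j ∉ X then w i j else 0 := by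
      rw [← sum_add_sum_compl X]
      congr 1 <;> refine sum_congr rfl fun i hi => ?_
      · simp only [hi, true_iff, ← mem_compl, sum_ite_mem, univ_inter]
      · simp only [mem_compl.1 hi, false_iff, not_not, sum_ite_mem, univ_inter]

lemma one_dotProduct_cutVector (X : Finset V) : 1 ⬝ᵥ cutVector R X = 0 := by
  rw [one_dotProduct, sum_comp_cutVector fun t => t]
  simp only [nsmul_eq_mul]
  ring

lemma cutVector_dotProduct_self (X : Finset V) :
    cutVector R X ⬝ᵥ cutVector R X = Fintype.card V * (#X * #Xᶜ) := by
  rw [dotProduct, sum_comp_cutVector fun t => t * t, ← card_add_card_compl X, Nat.cast_add]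
  simp only [nsmul_eq_mul]
  ring

lemma cutVector_sub_sq (X : Finset V) (i j : V) :
    (cutVector R X i - cutVector R X j) ^ 2 =
      if i ∈ X ↔ j ∉ X then (Fintype.card V : R) ^ 2 else 0 := by
  rw [← card_add_card_compl X, Nat.cast_add]
  by_cases hi : i ∈ X <;> by_cases hj : j ∈ X <;>
    simp only [cutVector, hi, hj, if_true, if_false, not_true, not_false_iff, iff_true,
      iff_false] <;>
    ring

lemma cutVector_dotProduct_weightedLaplacian_mulVec [NoZeroDivisors R] [NeZero (2 : R)]
    (hw : w.IsSymm) (X : Finset V) :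
    cutVector R X ⬝ᵥ weightedLaplacian w *ᵥ cutVector R X =
      Fintype.card V ^ 2 * cutWeight w X := by
  refine mul_left_cancel₀ (two_ne_zero' R) ?_
  rw [two_mul_dotProduct_weightedLaplacian_mulVec hw, mul_left_comm, two_mul_cutWeight hw]
  simp only [cutVector_sub_sq, mul_sum, mul_ite, ite_mul, mul_zero, zero_mul, mul_comm (w _ _)]

end CommRing

section Real

variable {w : Matrix V V ℝ}

lemma posSemidef_weightedLaplacian (hw : w.IsSymm) (hw0 : ∀ i j, 0 ≤ w i j) :
    (weightedLaplacian w).PosSemidef := by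
  refine .of_dotProduct_mulVec_nonneg (isHermitian_weightedLaplacian hw) fun x => ?_
  have hsum : 0 ≤ ∑ i, ∑ j, w i j * (x i - x j) ^ 2 :=
    sum_nonneg fun i _ => sum_nonneg fun j _ => mul_nonneg (hw0 i j) (sq_nonneg _)
  rw [star_trivial]
  linarith [two_mul_dotProduct_weightedLaplacian_mulVec hw x]

lemma cutWeight_le_of_eigenvalues_le [Nonempty V] (hw : w.IsSymm) (X : Finset V) {c : ℝ}
    (hc : ∀ i, (isHermitian_weightedLaplacian hw).eigenvalues i ≤ c) :
    cutWeight w X ≤ #X * #Xᶜ / Fintype.card V * c := by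
  have hcard : (0 : ℝ) < Fintype.card V := mod_cast Fintype.card_pos
  have h := re_star_dotProduct_mulVec_le_of_eigenvalues_le (isHermitian_weightedLaplacian hw) hc
    (cutVector ℝ X)
  simp only [star_trivial, RCLike.re_to_real, cutVector_dotProduct_self,
    cutVector_dotProduct_weightedLaplacian_mulVec hw] at h
  refine le_of_mul_le_mul_left (h.trans_eq ?_) (pow_pos hcard 2)
  field_simp

lemma le_cutWeight_of_le_eigenvalues_of_ne (hw : w.IsSymm) (hw0 : ∀ i j, 0 ≤ w i j) (X : Finset V)
    {c : ℝ} {i₀ : V} (hc : ∀ i ≠ i₀, c ≤ (isHermitian_weightedLaplacian hw).eigenvalues i) :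
    #X * #Xᶜ / Fintype.card V * c ≤ cutWeight w X := by
  have : Nonempty V := ⟨i₀⟩
  have hcard : (0 : ℝ) < Fintype.card V := mod_cast Fintype.card_pos
  have hone : weightedLaplacian w *ᵥ 1 = (0 : ℝ) • 1 := by
    rw [weightedLaplacian_mulVec_one, zero_smul]
  have h := le_re_star_dotProduct_mulVec_of_star_eigenvector_dotProduct_eq_zero
    (isHermitian_weightedLaplacian hw) hone one_ne_zero
    ((posSemidef_weightedLaplacian hw hw0).eigenvalues_nonneg i₀) hc
    (by rw [star_trivial, one_dotProduct_cutVector X])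
  simp only [star_trivial, RCLike.re_to_real, cutVector_dotProduct_self,
    cutVector_dotProduct_weightedLaplacian_mulVec hw] at h
  refine le_of_mul_le_mul_left (h.trans_eq' ?_) (pow_pos hcard 2)
  field_simp

theorem somborIndex_bipartite_laplacian_bounds_general (hw : w.IsSymm) (hw0 : ∀ i j, 0 ≤ w i j)
    (X : Finset V) {n : ℕ} (hn : 2 ≤ n) (σ : Fin n ≃ V)
    (hmono : Monotone fun i => (isHermitian_weightedLaplacian hw).eigenvalues (σ i)) :
    #X * #Xᶜ / n * (isHermitian_weightedLaplacian hw).eigenvalues (σ ⟨1, hn⟩) ≤ cutWeight w X ∧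
      cutWeight w X ≤ #X * #Xᶜ / n *
        (isHermitian_weightedLaplacian hw).eigenvalues (σ ⟨n - 1, Nat.sub_one_lt_of_lt hn⟩) := by
  obtain rfl : n = Fintype.card V := by rw [← Fintype.card_congr σ, Fintype.card_fin]
  have : Nonempty V := ⟨σ ⟨0, by omega⟩⟩
  constructor
  · refine le_cutWeight_of_le_eigenvalues_of_ne hw hw0 X (i₀ := σ ⟨0, by omega⟩)
      (σ.forall_congr_right.1 fun k hk => hmono ?_)
    have hk0 : k.val ≠ 0 := fun h => hk (congr_arg σ (Fin.ext h))
    exact Fin.mk_le_of_le_val (by omega)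
  · refine cutWeight_le_of_eigenvalues_le hw X (σ.forall_congr_right.1 fun k => hmono ?_)
    exact Fin.mk_le_mk.2 (by omega)

end Real

end WeightedLaplacian

section Sombor

variable {n : ℕ} (G : SimpleGraph (Fin n)) [DecidableRel G.Adj] (p : ℝ)

lemma isSymm_somborMatrix : (somborMatrix n G p).IsSymm := by
  ext i j
  simp only [somborMatrix, Matrix.transpose_apply, Matrix.of_apply, G.adj_comm i j, add_comm]

lemma somborMatrix_nonneg (i j : Fin n) : 0 ≤ somborMatrix n G p i j := by
  rw [somborMatrix, Matrix.of_apply]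
  positivity

variable {G} in
lemma somborIndex_eq_cutWeight {X : Finset (Fin n)}
    (hX : ∀ u v, G.Adj u v → (u ∈ X ↔ v ∉ X)) :
    somborIndex n G p = cutWeight (somborMatrix n G p) X := by
  have hsupp (i j : Fin n) :
      (if i ∈ X ↔ j ∉ X then somborMatrix n G p i j else 0) = somborMatrix n G p i j := by
    refine ite_eq_left_iff.2 fun hij => ?_
    rw [somborMatrix, Matrix.of_apply, if_neg (mt (hX i j) hij)]
  have h := two_mul_cutWeight (isSymm_somborMatrix G p) X
  simp only [hsupp] at h
  calc
    somborIndex n G p = 1 / 2 * ∑ i, ∑ j, somborMatrix n G p i j := rfl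
    _ = cutWeight (somborMatrix n G p) X := by rw [← h]; ring

end Sombor

/-- For a connected bipartite graph on `n ≥ 2` vertices with bipartition
`(X, Xᶜ)`, `n₁ = |X|`, `n₂ = |Xᶜ|`, listing the `p`-Sombor Laplacian eigenvalues in
nondecreasing order via a permutation `σ`:
`(n₁ n₂ / n) η_2nd-min ≤ SO_p(G) ≤ (n₁ n₂ / n) η_max`. -/
theorem somborIndex_bipartite_laplacian_bounds (n : ℕ) (hn : 2 ≤ n)
    (G : SimpleGraph (Fin n)) [DecidableRel G.Adj] (hconn : G.Connected)
    (X : Finset (Fin n)) (hbip : ∀ u v, G.Adj u v → (u ∈ X ↔ v ∉ X))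
    (p : ℝ) (hp : p ≠ 0) (hH : (somborLaplacian n G p).IsHermitian)
    (σ : Equiv.Perm (Fin n)) (hmono : Monotone (fun i => hH.eigenvalues (σ i))) :
    ((X.card : ℝ) * (Xᶜ.card : ℝ) / (n : ℝ)) * hH.eigenvalues (σ ⟨1, by omega⟩) ≤
        somborIndex n G p ∧
      somborIndex n G p ≤
        ((X.card : ℝ) * (Xᶜ.card : ℝ) / (n : ℝ)) * hH.eigenvalues (σ ⟨n - 1, by omega⟩) := by
  rw [somborIndex_eq_cutWeight p hbip]
  exact somborIndex_bipartite_laplacian_bounds_general (isSymm_somborMatrix G p)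
    (somborMatrix_nonneg G p) X hn σ hmono
end
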